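/- (Elliptic Sobolev inequality in Orlicz form) Let 1 ≤ q < min{n, g₀} and q* = nq/(n − q). Then there exists a constant c > 0, depending only on n, g₁ and q, such that for every R > 0 and every u ∈ C_c^∞(B_R), where B_R ⊂ ℝⁿ is a ball of radius R, one has (⨍_{B_R} F̃(|u(x)|/R)^{q*} dx)^{1/q*} ≤ c·(⨍_{B_R} G(|Du(x)|) dx)^{1/q}, where ⨍ denotes the integral average. -/

import Mathlib

open Real MeasureTheory Set Filter

/-- `G` is a positive primitive of `g` on `(0, ∞)` with `G 0 = 0` and with growth exponents
between `a` and `b`: `a G(s) ≤ s g(s) ≤ b G(s)`. -/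
structure IsOrliczPrimitive (a b : ℝ) (G g : ℝ → ℝ) : Prop where
  zero : G 0 = 0
  pos : ∀ s, 0 < s → 0 < G s
  hasDerivAt : ∀ s, 0 < s → HasDerivAt G (g s) s
  continuousOn : ContinuousOn g (Ioi 0)
  lower : ∀ s, 0 < s → a * G s ≤ s * g s
  upper : ∀ s, 0 < s → s * g s ≤ b * G s

theorem hasDerivAt_mul_rpow_neg {G g : ℝ → ℝ} {p s : ℝ} (hs : 0 < s)
    (hG : HasDerivAt G (g s) s) :
    HasDerivAt (fun s => G s * s ^ (-p)) ((s * g s - p * G s) * s ^ (-p - 1)) s := by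
  have h := hG.mul ((hasDerivAt_id s).rpow_const (p := -p) (Or.inl hs.ne'))
  refine h.congr_deriv ?_
  have e : s ^ (-p) = s ^ (-p - 1) * s := by
    rw [Real.rpow_sub_one hs.ne']; field_simp
  simp only [id]
  rw [e]; ring

theorem monotoneOn_mul_rpow_neg {G g : ℝ → ℝ} {p : ℝ}
    (hG : ∀ s, 0 < s → HasDerivAt G (g s) s) (h : ∀ s, 0 < s → p * G s ≤ s * g s) :
    MonotoneOn (fun s => G s * s ^ (-p)) (Ioi 0) := by
  have hd := fun s (hs : 0 < s) => hasDerivAt_mul_rpow_neg (p := p) hs (hG s hs)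
  refine monotoneOn_of_deriv_nonneg (convex_Ioi 0)
    (fun s hs => (hd s hs).continuousAt.continuousWithinAt) ?_ ?_ <;> rw [interior_Ioi]
  · exact fun s hs => (hd s hs).differentiableAt.differentiableWithinAt
  · intro s (hs : 0 < s)
    rw [(hd s hs).deriv]
    exact mul_nonneg (sub_nonneg.2 (h s hs)) (Real.rpow_nonneg hs.le _)

theorem antitoneOn_mul_rpow_neg {G g : ℝ → ℝ} {p : ℝ}
    (hG : ∀ s, 0 < s → HasDerivAt G (g s) s) (h : ∀ s, 0 < s → s * g s ≤ p * G s) :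
    AntitoneOn (fun s => G s * s ^ (-p)) (Ioi 0) := by
  have hm := monotoneOn_mul_rpow_neg (G := fun s => -G s) (g := fun s => -g s) (p := p)
    (fun s hs => (hG s hs).neg) (fun s hs => by linarith [h s hs])
  intro s hs t ht hst
  have := hm hs ht hst
  simp only [neg_mul, neg_le_neg_iff] at this
  exact this

namespace IsOrliczPrimitive

variable {a b q : ℝ} {G g : ℝ → ℝ}

theorem nonneg (h : IsOrliczPrimitive a b G g) {s : ℝ} (hs : 0 ≤ s) : 0 ≤ G s := by
  rcases hs.eq_or_lt with rfl | hs
  · exact h.zero.ge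
  · exact (h.pos s hs).le

/-- `G(s)/s^q` is nondecreasing for `q ≤ a`. -/
theorem mul_rpow_le (h : IsOrliczPrimitive a b G g) (hqa : q ≤ a) {s t : ℝ} (hs : 0 < s)
    (hst : s ≤ t) : G s * t ^ q ≤ G t * s ^ q := by
  have ht := hs.trans_le hst
  have hm := monotoneOn_mul_rpow_neg (p := q) h.hasDerivAt
    (fun s hs => (mul_le_mul_of_nonneg_right hqa (h.pos s hs).le).trans (h.lower s hs))
    (mem_Ioi.2 hs) (mem_Ioi.2 ht) hst
  simp only [Real.rpow_neg hs.le, Real.rpow_neg ht.le, ← div_eq_mul_inv] at hm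
  rwa [div_le_div_iff₀ (Real.rpow_pos_of_pos hs _) (Real.rpow_pos_of_pos ht _)] at hm

/-- `G(s)/s^b` is nonincreasing. -/
theorem mul_rpow_ge (h : IsOrliczPrimitive a b G g) {s t : ℝ} (hs : 0 < s)
    (hst : s ≤ t) : G t * s ^ b ≤ G s * t ^ b := by
  have ht := hs.trans_le hst
  have hm := antitoneOn_mul_rpow_neg (p := b) h.hasDerivAt h.upper
    (mem_Ioi.2 hs) (mem_Ioi.2 ht) hst
  simp only [Real.rpow_neg hs.le, Real.rpow_neg ht.le, ← div_eq_mul_inv] at hm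
  rwa [div_le_div_iff₀ (Real.rpow_pos_of_pos ht _) (Real.rpow_pos_of_pos hs _)] at hm

theorem le_mul_rpow (h : IsOrliczPrimitive a b G g) {s : ℝ} (hs : 0 < s) (hs1 : s ≤ 1) :
    G s ≤ G 1 * s ^ a := by
  simpa using h.mul_rpow_le le_rfl hs hs1

/-- Splitting `G(t)(ρ/t)^q` into a small multiple of `G(t)` and a multiple of `G(ρ)`. -/
theorem mul_div_rpow_le (h : IsOrliczPrimitive a b G g) (hq : 0 < q) (hqa : q ≤ a) {η : ℝ}
    (hη : 0 < η) (hη1 : η ≤ 1) {t ρ : ℝ} (ht : 0 < t) (hρ : 0 ≤ ρ) :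
    G t * (ρ / t) ^ q ≤ η ^ q * G t + η ^ (q - b) * G ρ := by
  have hGt := h.pos t ht
  have hGρ := h.nonneg hρ
  have hb : 0 < η ^ (q - b) := Real.rpow_pos_of_pos hη _
  have hηq : 0 < η ^ q := Real.rpow_pos_of_pos hη _
  rcases le_or_gt ρ (η * t) with hc | hc
  · have : (ρ / t) ^ q ≤ η ^ q := by
      apply Real.rpow_le_rpow (by positivity) _ hq.le
      rwa [div_le_iff₀ ht]
    nlinarith [mul_le_mul_of_nonneg_left this hGt.le, mul_nonneg hb.le hGρ]
  · have hρ' : 0 < ρ := lt_trans (by positivity) hc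
    have hle : t ≤ ρ / η := by rw [le_div_iff₀ hη]; linarith
    have h1 := h.mul_rpow_le hqa ht hle
    have h2 := h.mul_rpow_ge hρ' (t := ρ / η) (by rw [le_div_iff₀ hη]; nlinarith)
    have ht' : 0 < t ^ q := Real.rpow_pos_of_pos ht _
    have hρb : 0 < ρ ^ b := Real.rpow_pos_of_pos hρ' _
    have hηb : 0 < η ^ b := Real.rpow_pos_of_pos hη _
    rw [Real.div_rpow hρ hη.le] at h1 h2
    have h2' : G (ρ / η) ≤ G ρ / η ^ b := by
      rw [le_div_iff₀ hηb]
      have : G (ρ / η) * ρ ^ b * η ^ b ≤ G ρ * ρ ^ b := by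
        calc G (ρ / η) * ρ ^ b * η ^ b ≤ G ρ * (ρ ^ b / η ^ b) * η ^ b := by gcongr
          _ = G ρ * ρ ^ b := by field_simp
      nlinarith
    have h3 : G t * (ρ / t) ^ q ≤ η ^ (q - b) * G ρ := by
      rw [Real.div_rpow hρ ht.le, Real.rpow_sub hη]
      calc G t * (ρ ^ q / t ^ q) = (G t * (ρ ^ q / η ^ q)) * (η ^ q / t ^ q) := by field_simp
        _ ≤ (G (ρ / η) * t ^ q) * (η ^ q / t ^ q) := by gcongr
        _ = G (ρ / η) * η ^ q := by field_simp
        _ ≤ G ρ / η ^ b * η ^ q := by gcongr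
        _ = _ := by field_simp
    linarith [mul_pos hηq hGt]

theorem tendsto_zero (h : IsOrliczPrimitive a b G g) (ha : 0 < a) :
    Tendsto (fun t : ℝ => G |t|) (nhds 0) (nhds 0) := by
  have hlim : Tendsto (fun t : ℝ => G 1 * |t| ^ a) (nhds 0) (nhds 0) := by
    have : ContinuousAt (fun t : ℝ => G 1 * |t| ^ a) 0 :=
      continuousAt_const.mul (continuous_abs.continuousAt.rpow_const (Or.inr ha.le))
    simpa [ContinuousAt, Real.zero_rpow ha.ne'] using this
  refine squeeze_zero' (Eventually.of_forall fun t => h.nonneg (abs_nonneg t)) ?_ hlim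
  filter_upwards [Metric.ball_mem_nhds (0 : ℝ) one_pos] with t ht
  rcases eq_or_ne t 0 with rfl | h0
  · simp [h.zero, Real.zero_rpow ha.ne']
  · exact h.le_mul_rpow (abs_pos.2 h0) (by simpa using (mem_ball_zero_iff.1 ht).le)

theorem continuous_comp_abs (h : IsOrliczPrimitive a b G g) (ha : 0 < a) :
    Continuous fun t : ℝ => G |t| := by
  refine continuous_iff_continuousAt.2 fun t => ?_
  rcases eq_or_ne t 0 with rfl | h0
  · simpa [ContinuousAt, h.zero] using h.tendsto_zero ha
  · exact ContinuousAt.comp (f := fun t : ℝ => |t|) (g := G)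
      (h.hasDerivAt _ (abs_pos.2 h0)).continuousAt continuous_abs.continuousAt

/-- `t ↦ G(|t|)^{1/q}` is `C¹` when `q < a`, and its derivative is controlled by
`G(|t|)^{1/q}/|t|`. -/
theorem exists_hasDerivAt_rpow (h : IsOrliczPrimitive a b G g) (hq : 0 < q) (hqa : q < a) :
    ∃ ψ : ℝ → ℝ, Continuous ψ ∧ ψ 0 = 0 ∧
      (∀ t, HasDerivAt (fun t : ℝ => G |t| ^ (1 / q)) (ψ t) t) ∧
      ∀ t, |ψ t| ≤ b / q * (G |t| ^ (1 / q) / |t|) := by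
  have ha : 0 < a := hq.trans hqa
  let ψ : ℝ → ℝ := fun t => g |t| * (t / |t|) * (1 / q) * G |t| ^ (1 / q - 1)
  have hψ0 : ψ 0 = 0 := by simp [ψ]
  have hbound : ∀ t, |ψ t| ≤ b / q * (G |t| ^ (1 / q) / |t|) := by
    intro t
    rcases eq_or_ne t 0 with rfl | h0
    · simp [ψ]
    have ht := abs_pos.2 h0
    have hG := h.pos _ ht
    have hu := h.upper _ ht
    have hg : 0 ≤ g |t| := by
      have := h.lower _ ht
      by_contra hneg
      push Not at hneg
      nlinarith [mul_pos ha hG]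
    have hP : 0 < G |t| ^ (1 / q) := Real.rpow_pos_of_pos hG _
    simp only [ψ, abs_mul, abs_div, abs_abs, div_self ht.ne', abs_of_nonneg hg, abs_of_pos hq,
      abs_one, Real.rpow_sub_one hG.ne', abs_of_pos hP, abs_of_pos hG]
    rw [show b / q * (G |t| ^ (1 / q) / |t|)
      = (b * G |t|) * (G |t| ^ (1 / q) / (q * |t| * G |t|)) by field_simp,
      show g |t| * 1 * (1 / q) * (G |t| ^ (1 / q) / G |t|)
      = (|t| * g |t|) * (G |t| ^ (1 / q) / (q * |t| * G |t|)) by field_simp]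
    gcongr
  have hcont0 : ContinuousAt ψ 0 := by
    rw [ContinuousAt, hψ0]
    have hbpos : 0 ≤ b := by
      have := (h.lower 1 one_pos).trans (h.upper 1 one_pos)
      nlinarith [h.pos 1 one_pos]
    have he : 0 < a / q - 1 := by rw [sub_pos, lt_div_iff₀ hq]; linarith
    have hlim : Tendsto (fun t : ℝ => b / q * (G 1 ^ (1 / q) * |t| ^ (a / q - 1)))
        (nhds 0) (nhds 0) := by
      have : ContinuousAt (fun t : ℝ => b / q * (G 1 ^ (1 / q) * |t| ^ (a / q - 1))) 0 :=
        continuousAt_const.mul (continuousAt_const.mul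
          (continuous_abs.continuousAt.rpow_const (Or.inr he.le)))
      simpa [ContinuousAt, Real.zero_rpow he.ne'] using this
    refine squeeze_zero_norm' ?_ hlim
    filter_upwards [Metric.ball_mem_nhds (0 : ℝ) one_pos] with t ht
    rcases eq_or_ne t 0 with rfl | h0
    · simp [hψ0, Real.zero_rpow he.ne']
    have ht0 := abs_pos.2 h0
    refine (hbound t).trans ?_
    gcongr
    rw [div_le_iff₀ ht0, Real.rpow_sub_one ht0.ne', mul_assoc, div_mul_cancel₀ _ ht0.ne']
    calc G |t| ^ (1 / q) ≤ (G 1 * |t| ^ a) ^ (1 / q) :=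
          Real.rpow_le_rpow (h.nonneg ht0.le)
            (h.le_mul_rpow ht0 (by simpa using (mem_ball_zero_iff.1 ht).le)) (by positivity)
      _ = _ := by
        rw [Real.mul_rpow (h.pos 1 one_pos).le (by positivity), ← Real.rpow_mul ht0.le]
        congr 2; ring
  have hderiv : ∀ t, t ≠ 0 → HasDerivAt (fun t : ℝ => G |t| ^ (1 / q)) (ψ t) t := by
    intro t h0
    have ht := abs_pos.2 h0
    have habs : HasDerivAt (fun t : ℝ => |t|) (t / |t|) t := by
      convert hasDerivAt_abs h0 using 1
      rcases h0.lt_or_gt with h1 | h1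
      · simp [abs_of_neg h1, h1, h0]
      · simp [abs_of_pos h1, h1, h0]
    exact ((h.hasDerivAt _ ht).comp t habs).rpow_const (Or.inl (h.pos _ ht).ne')
  refine ⟨ψ, continuous_iff_continuousAt.2 fun t => ?_, hψ0, ?_, hbound⟩
  · rcases eq_or_ne t 0 with rfl | h0
    · exact hcont0
    have ht := abs_pos.2 h0
    have hgc : ContinuousAt (fun t : ℝ => g |t|) t :=
      ContinuousAt.comp (f := fun t : ℝ => |t|) (g := g)
        (h.continuousOn.continuousAt (Ioi_mem_nhds ht)) continuous_abs.continuousAt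
    refine ((hgc.mul (continuousAt_id.div continuous_abs.continuousAt ht.ne')).mul
      continuousAt_const).mul ?_
    exact (h.continuous_comp_abs ha).continuousAt.rpow_const (Or.inl (h.pos _ ht).ne')
  · exact hasDerivAt_of_hasDerivAt_of_ne' hderiv
      ((h.continuous_comp_abs ha).continuousAt.rpow_const (Or.inr (by positivity))) hcont0

end IsOrliczPrimitive

/-- The Orlicz condition on `g` makes `∫₀ˢ g` an Orlicz primitive. -/
theorem isOrliczPrimitive_of_orlicz_condition {g₀ g₁ : ℝ} (hg₀ : 1 < g₀) {g g' G : ℝ → ℝ}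
    (hpos : ∀ s, 0 < s → 0 < g s) (hd : ∀ s, 0 < s → HasDerivAt g (g' s) s)
    (ho : ∀ s, 0 < s → (g₀ - 1) * g s ≤ s * g' s ∧ s * g' s ≤ (g₁ - 1) * g s)
    (hG : ∀ s, G s = ∫ r in (0:ℝ)..s, g r) : IsOrliczPrimitive g₀ g₁ G g := by
  have hcont : ContinuousOn g (Ioi 0) := fun s hs => (hd s hs).continuousAt.continuousWithinAt
  have hmono : MonotoneOn g (Ioi 0) := by
    refine monotoneOn_of_deriv_nonneg (convex_Ioi 0) hcont ?_ ?_ <;> rw [interior_Ioi]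
    · exact fun s hs => (hd s hs).differentiableAt.differentiableWithinAt
    · intro s (hs : 0 < s)
      rw [(hd s hs).deriv]
      have h1 := (ho s hs).1
      have h2 : 0 ≤ s * g' s := le_trans (mul_nonneg (by linarith) (hpos s hs).le) h1
      exact nonneg_of_mul_nonneg_right h2 hs
  have hmono' : Monotone ((Ioi 0).indicator g) := by
    intro s t hst
    by_cases hs : 0 < s
    · have ht := hs.trans_le hst
      simpa [indicator, hs, ht] using hmono hs ht hst
    · rw [indicator_of_notMem (by simpa using hs)]
      exact indicator_nonneg (fun t ht => (hpos t ht).le) t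
  have hint : ∀ s, 0 ≤ s → IntervalIntegrable g volume 0 s := by
    intro s hs
    refine (hmono'.intervalIntegrable (a := 0) (b := s)).congr fun r hr => ?_
    rw [uIoc_of_le hs] at hr
    exact indicator_of_mem (mem_Ioi.2 hr.1) g
  have hderiv : ∀ s, 0 < s → HasDerivAt G (g s) s := by
    intro s hs
    rw [show G = fun u => ∫ r in (0:ℝ)..u, g r from funext hG]
    exact intervalIntegral.integral_hasDerivAt_right (hint s hs.le)
      (hcont.stronglyMeasurableAtFilter isOpen_Ioi s hs) (hd s hs).continuousAt
  have hG0 : G 0 = 0 := by simp [hG]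
  have hGcont : ContinuousOn G (Ici 0) := by
    intro s hs
    rcases (mem_Ici.1 hs).eq_or_lt with rfl | hs
    · have h1 : ContinuousOn G (uIcc 0 1) := by
        rw [show G = fun u => ∫ r in (0:ℝ)..u, g r from funext hG]
        exact intervalIntegral.continuousOn_primitive_interval
          ((intervalIntegrable_iff_integrableOn_Icc_of_le zero_le_one).1 (hint 1 zero_le_one)
            |>.mono_set (by simp [uIcc_of_le]))
      refine (h1 0 left_mem_uIcc).mono_of_mem_nhdsWithin ?_
      rw [uIcc_of_le zero_le_one]
      exact Icc_mem_nhdsGE one_pos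
    · exact (hderiv s hs).continuousAt.continuousWithinAt
  have hsgcont : ContinuousOn (fun s => s * g s) (Ici 0) := by
    intro s hs
    rcases (mem_Ici.1 hs).eq_or_lt with rfl | hs
    · have hlim : Tendsto (fun s : ℝ => s * g 1) (nhdsWithin 0 (Ici 0)) (nhds 0) := by
        have : ContinuousAt (fun s : ℝ => s * g 1) 0 := by fun_prop
        simpa [ContinuousAt] using this.tendsto.mono_left nhdsWithin_le_nhds
      rw [ContinuousWithinAt, zero_mul]
      refine squeeze_zero' ?_ ?_ hlim
      · filter_upwards [self_mem_nhdsWithin] with s hs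
        rcases (mem_Ici.1 hs).eq_or_lt with rfl | hs
        · simp
        · exact mul_nonneg hs.le (hpos s hs).le
      · filter_upwards [Icc_mem_nhdsGE (one_pos : (0:ℝ) < 1)] with s hs
        rcases hs.1.eq_or_lt with rfl | hs0
        · simp
        · exact mul_le_mul_of_nonneg_left (hmono hs0 (mem_Ioi.2 one_pos) hs.2) hs0.le
    · exact (continuousAt_id.mul (hd s hs).continuousAt).continuousWithinAt
  have hlower : ∀ p : ℝ, ∀ s, 0 < s →
      HasDerivAt (fun s => s * g s - p * G s) (s * g' s - (p - 1) * g s) s := by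
    intro p s hs
    refine (((hasDerivAt_id s).mul (hd s hs)).sub ((hderiv s hs).const_mul p)).congr_deriv ?_
    simp only [id]; ring
  refine ⟨hG0, ?_, hderiv, hcont, ?_, ?_⟩
  · intro s hs
    rw [hG]
    exact intervalIntegral.intervalIntegral_pos_of_pos_on (hint s hs.le)
      (fun r hr => hpos r hr.1) hs
  · intro s hs
    have hm : MonotoneOn (fun s => s * g s - g₀ * G s) (Ici 0) := by
      refine monotoneOn_of_deriv_nonneg (convex_Ici 0)
        (hsgcont.sub (continuousOn_const.mul hGcont)) ?_ ?_ <;> rw [interior_Ici]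
      · exact fun s hs => (hlower g₀ s hs).differentiableAt.differentiableWithinAt
      · intro s hs
        rw [(hlower g₀ s hs).deriv]
        linarith [(ho s hs).1]
    have := hm (mem_Ici.2 le_rfl) (mem_Ici.2 hs.le) hs.le
    simp only [hG0] at this
    linarith
  · intro s hs
    have hm : AntitoneOn (fun s => s * g s - g₁ * G s) (Ici 0) := by
      refine antitoneOn_of_deriv_nonpos (convex_Ici 0)
        (hsgcont.sub (continuousOn_const.mul hGcont)) ?_ ?_ <;> rw [interior_Ici]
      · exact fun s hs => (hlower g₁ s hs).differentiableAt.differentiableWithinAt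
      · intro s hs
        rw [(hlower g₁ s hs).deriv]
        linarith [(ho s hs).2]
    have := hm (mem_Ici.2 le_rfl) (mem_Ici.2 hs.le) hs.le
    simp only [hG0] at this
    linarith

/-- The values defining `F(s)` are bounded, since `G` grows faster than `r^q`. -/
theorem IsOrliczPrimitive.bddAbove {a b q : ℝ} {G g : ℝ → ℝ} (h : IsOrliczPrimitive a b G g)
    (hq : 0 < q) (hqa : q < a) {s : ℝ} (hs : 0 ≤ s) :
    BddAbove ((fun r => (max ((s * r) ^ q - G r) 0) ^ (1 / q)) '' Ioi 0) := by
  have hG1 := h.pos 1 one_pos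
  have ha : 0 < a - q := sub_pos.2 hqa
  set M := max 1 ((s ^ q / G 1) ^ (1 / (a - q))) with hM
  have hM1 : 1 ≤ M := le_max_left _ _
  refine ⟨s * M, ?_⟩
  rintro _ ⟨r, hr, rfl⟩
  have hr : 0 < r := hr
  have hsM : 0 ≤ s * M := by positivity
  have key : (s * r) ^ q - G r ≤ (s * M) ^ q := by
    rcases le_total r M with hrM | hrM
    · have : (s * r) ^ q ≤ (s * M) ^ q :=
        Real.rpow_le_rpow (by positivity) (mul_le_mul_of_nonneg_left hrM hs) hq.le
      linarith [h.pos r hr]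
    · have h1 := h.mul_rpow_le le_rfl one_pos (hM1.trans hrM)
      rw [Real.one_rpow, mul_one] at h1
      have h2 : s ^ q / G 1 ≤ r ^ (a - q) := by
        have h3 : (s ^ q / G 1) ^ (1 / (a - q)) ≤ r := (le_max_right _ _).trans hrM
        have h4 := Real.rpow_le_rpow (by positivity) h3 ha.le
        rwa [← Real.rpow_mul (by positivity), one_div_mul_cancel ha.ne', Real.rpow_one] at h4
      rw [div_le_iff₀ hG1] at h2
      have h5 : (s * r) ^ q ≤ G r := by
        rw [Real.mul_rpow hs hr.le]
        calc s ^ q * r ^ q ≤ r ^ (a - q) * G 1 * r ^ q := by gcongr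
          _ = G 1 * r ^ a := by
            rw [Real.rpow_sub hr]
            have := Real.rpow_pos_of_pos hr q
            field_simp
          _ ≤ G r := h1
      have : 0 ≤ (s * M) ^ q := by positivity
      linarith
  calc (max ((s * r) ^ q - G r) 0) ^ (1 / q) ≤ ((s * M) ^ q) ^ (1 / q) :=
        Real.rpow_le_rpow (le_max_right _ _) (max_le key (by positivity)) (by positivity)
    _ = s * M := by rw [← Real.rpow_mul hsM, mul_one_div_cancel hq.ne', Real.rpow_one]

/-- The Young conjugate of `F` is nonnegative and bounded by `G^{1/q}`. -/
theorem IsOrliczPrimitive.conjugate_mem_Icc {a b q : ℝ} {G g : ℝ → ℝ}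
    (h : IsOrliczPrimitive a b G g) (hq : 1 ≤ q) (hqa : q < a) {F Ft : ℝ → ℝ}
    (hF : ∀ s, F s = sSup ((fun r => (max ((s * r) ^ q - G r) 0) ^ (1 / q)) '' Ioi 0))
    (hFt : ∀ s, Ft s = sSup ((fun r => s * r - F r) '' Ici 0)) {v : ℝ} (hv : 0 ≤ v) :
    Ft v ∈ Icc 0 (G v ^ (1 / q)) := by
  have hq0 : 0 < q := by linarith
  have hGv : 0 ≤ G v ^ (1 / q) := Real.rpow_nonneg (h.nonneg hv) _
  have hle : ∀ x ∈ (fun r => v * r - F r) '' Ici 0, x ≤ G v ^ (1 / q) := by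
    rintro _ ⟨s, hs, rfl⟩
    have hs : 0 ≤ s := hs
    have hF0 : 0 ≤ F s := by
      rw [hF]
      refine Real.sSup_nonneg ?_
      rintro _ ⟨r, -, rfl⟩
      exact Real.rpow_nonneg (le_max_right _ _) _
    rcases hv.eq_or_lt with rfl | hv
    · simp only [zero_mul]; linarith
    have h1 : (max ((s * v) ^ q - G v) 0) ^ (1 / q) ≤ F s := by
      rw [hF]
      exact le_csSup (h.bddAbove hq0 hqa hs) ⟨v, hv, rfl⟩
    have h2 : s * v ≤ (max ((s * v) ^ q - G v) 0) ^ (1 / q) + G v ^ (1 / q) := by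
      calc s * v = ((s * v) ^ q) ^ (1 / q) := by
            rw [← Real.rpow_mul (by positivity), mul_one_div_cancel hq0.ne', Real.rpow_one]
        _ ≤ (max ((s * v) ^ q - G v) 0 + G v) ^ (1 / q) := by
            refine Real.rpow_le_rpow (by positivity) ?_ (by positivity)
            linarith [le_max_left ((s * v) ^ q - G v) 0]
        _ ≤ _ := Real.rpow_add_le_add_rpow (le_max_right _ _) (h.nonneg hv.le) (by positivity)
            (by rw [div_le_one hq0]; exact hq)
    simp only
    linarith [mul_comm s v]
  have hF0 : F 0 = 0 := by
    rw [hF]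
    refine le_antisymm (Real.sSup_le ?_ le_rfl) (Real.sSup_nonneg ?_)
    · rintro _ ⟨r, hr, rfl⟩
      have : (0 * r) ^ q - G r ≤ 0 := by
        rw [zero_mul, Real.zero_rpow hq0.ne']; linarith [h.pos r hr]
      simp only [max_eq_right this]
      rw [Real.zero_rpow (by positivity)]
    · rintro _ ⟨r, -, rfl⟩
      exact Real.rpow_nonneg (le_max_right _ _) _
  rw [hFt]
  refine ⟨le_csSup ⟨_, hle⟩ ⟨0, mem_Ici.2 le_rfl, by simp [hF0]⟩, Real.sSup_le hle hGv⟩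

theorem volume_real_ball_euclideanSpace {n : ℕ} (hn : 0 < n) (x₀ : EuclideanSpace ℝ (Fin n))
    {R : ℝ} (hR : 0 < R) :
    volume.real (Metric.ball x₀ R)
      = R ^ n * volume.real (Metric.ball (0 : EuclideanSpace ℝ (Fin n)) 1) := by
  have : Nonempty (Fin n) := ⟨⟨0, hn⟩⟩
  rw [Measure.real, Measure.addHaar_ball _ _ hR.le, ENNReal.toReal_mul, finrank_euclideanSpace_fin,
    ENNReal.toReal_ofReal (by positivity), Measure.real]

/-- The Gagliardo–Nirenberg–Sobolev inequality for averages over balls. -/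
theorem exists_average_sobolev {n : ℕ} {q : ℝ} (hq : 1 ≤ q) (hqn : q < n) :
    ∃ K : ℝ, 0 ≤ K ∧ ∀ (R : ℝ), 0 < R → ∀ (x₀ : EuclideanSpace ℝ (Fin n))
      (w : EuclideanSpace ℝ (Fin n) → ℝ), ContDiff ℝ 1 w → HasCompactSupport w →
      tsupport w ⊆ Metric.ball x₀ R →
      (⨍ x in Metric.ball x₀ R, |w x| ^ (n * q / (n - q))) ^ (1 / (n * q / (n - q)))
        ≤ K * R * (⨍ x in Metric.ball x₀ R, ‖fderiv ℝ w x‖ ^ q) ^ (1 / q) := by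
  have hq0 : 0 < q := by linarith
  have hn0' : (0 : ℝ) < n := hq0.trans hqn
  have hn0 : 0 < n := by exact_mod_cast hn0'
  have hsub : (0 : ℝ) < n - q := sub_pos.2 hqn
  set p : ℝ := n * q / (n - q) with hp
  have hp0 : 0 < p := by positivity
  set ω := volume.real (Metric.ball (0 : EuclideanSpace ℝ (Fin n)) 1) with hω
  have hω0 : 0 < ω := ENNReal.toReal_pos (Metric.measure_ball_pos _ _ one_pos).ne'
    measure_ball_lt_top.ne
  set C : ℝ := (eLpNormLESNormFDerivOfEqInnerConst
    (volume : Measure (EuclideanSpace ℝ (Fin n))) q : ℝ) with hC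
  have hC0 : 0 ≤ C := NNReal.coe_nonneg _
  refine ⟨C * ω ^ (1 / (n : ℝ)), by positivity, fun R hR x₀ w hw hcw hsw => ?_⟩
  have hexp : p⁻¹ = q⁻¹ - (n : ℝ)⁻¹ := by rw [hp]; field_simp
  obtain ⟨P, hP⟩ : ∃ P : NNReal, (P : ℝ) = p := ⟨⟨p, hp0.le⟩, rfl⟩
  obtain ⟨Q, hQ⟩ : ∃ Q : NNReal, (Q : ℝ) = q := ⟨⟨q, hq0.le⟩, rfl⟩
  have hsob := eLpNorm_le_eLpNorm_fderiv_of_eq_inner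
    (volume : Measure (EuclideanSpace ℝ (Fin n))) hw hcw (p := Q) (p' := P)
    (by rw [← NNReal.coe_le_coe, hQ]; exact hq) (by simpa using hn0)
    (by simpa [hP, hQ] using hexp)
  have hDw : Continuous (fderiv ℝ w) := hw.continuous_fderiv one_ne_zero
  rw [MemLp.eLpNorm_eq_integral_rpow_norm (by simpa [← NNReal.coe_eq_zero, hP] using hp0.ne')
      ENNReal.coe_ne_top (hw.continuous.memLp_of_hasCompactSupport hcw),
    MemLp.eLpNorm_eq_integral_rpow_norm (by simpa [← NNReal.coe_eq_zero, hQ] using hq0.ne')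
      ENNReal.coe_ne_top (hDw.memLp_of_hasCompactSupport (hcw.fderiv ℝ)),
    ← ENNReal.ofReal_coe_nnreal (p := eLpNormLESNormFDerivOfEqInnerConst volume (Q : ℝ)),
    ← ENNReal.ofReal_mul (NNReal.coe_nonneg _),
    ENNReal.ofReal_le_ofReal_iff (by positivity)] at hsob
  simp only [ENNReal.coe_toReal, hP, hQ, Real.norm_eq_abs] at hsob
  have hzero : ∀ x ∉ Metric.ball x₀ R, x ∉ tsupport w := fun x hx h => hx (hsw h)
  have hI : ∫ x in Metric.ball x₀ R, |w x| ^ p = ∫ x, |w x| ^ p := by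
    refine setIntegral_eq_integral_of_forall_compl_eq_zero fun x hx => ?_
    rw [image_eq_zero_of_notMem_tsupport (hzero x hx), abs_zero, Real.zero_rpow hp0.ne']
  have hJ : ∫ x in Metric.ball x₀ R, ‖fderiv ℝ w x‖ ^ q = ∫ x, ‖fderiv ℝ w x‖ ^ q := by
    refine setIntegral_eq_integral_of_forall_compl_eq_zero fun x hx => ?_
    rw [fderiv_of_notMem_tsupport ℝ (hzero x hx), norm_zero, Real.zero_rpow hq0.ne']
  rw [setAverage_eq, setAverage_eq, hI, hJ, volume_real_ball_euclideanSpace hn0 x₀ hR, ← hω]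
  set I := ∫ x, |w x| ^ p
  set J := ∫ x, ‖fderiv ℝ w x‖ ^ q
  have hI0 : 0 ≤ I := integral_nonneg fun x => by positivity
  have hJ0 : 0 ≤ J := integral_nonneg fun x => by positivity
  have hV : 0 < R ^ n * ω := by positivity
  simp only [smul_eq_mul, one_div]
  rw [Real.mul_rpow (by positivity) hI0, Real.mul_rpow (by positivity) hJ0]
  have hVe : ((R ^ n * ω)⁻¹) ^ p⁻¹ = ((R ^ n * ω)⁻¹) ^ q⁻¹ * (R * ω ^ (n : ℝ)⁻¹) := by
    rw [hexp, Real.rpow_sub (by positivity), Real.inv_rpow hV.le (n : ℝ)⁻¹, div_inv_eq_mul,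
      Real.mul_rpow (by positivity) hω0.le, Real.pow_rpow_inv_natCast hR.le hn0.ne']
  rw [hVe]
  calc _ ≤ ((R ^ n * ω)⁻¹) ^ q⁻¹ * (R * ω ^ (n : ℝ)⁻¹) * (C * J ^ q⁻¹) := by gcongr
    _ = _ := by ring

theorem average_ball_nonneg {n : ℕ} {R : ℝ} {x₀ : EuclideanSpace ℝ (Fin n)}
    {f : EuclideanSpace ℝ (Fin n) → ℝ} (hf : ∀ x, 0 ≤ f x) :
    0 ≤ ⨍ x in Metric.ball x₀ R, f x := by
  rw [setAverage_eq]
  exact mul_nonneg (by positivity) (integral_nonneg hf)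

theorem integrableOn_ball_of_continuous {n : ℕ} {R : ℝ} {x₀ : EuclideanSpace ℝ (Fin n)}
    {f : EuclideanSpace ℝ (Fin n) → ℝ} (hf : Continuous f) :
    IntegrableOn f (Metric.ball x₀ R) :=
  (hf.continuousOn.integrableOn_compact (isCompact_closedBall x₀ R)).mono_set
    Metric.ball_subset_closedBall

/-- The power mean inequality between the exponents `q ≤ p` on a ball. -/
theorem average_le_rpow_average {n : ℕ} {q p R : ℝ} (hq : 0 < q) (hqp : q ≤ p)
    (hR : 0 < R) (x₀ : EuclideanSpace ℝ (Fin n)) {w : EuclideanSpace ℝ (Fin n) → ℝ}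
    (hw : Continuous w) :
    ⨍ x in Metric.ball x₀ R, |w x| ^ q
      ≤ ((⨍ x in Metric.ball x₀ R, |w x| ^ p) ^ (1 / p)) ^ q := by
  have hp : 0 < p := hq.trans_le hqp
  have hint : ∀ r : ℝ, 0 ≤ r → IntegrableOn (fun x => |w x| ^ r) (Metric.ball x₀ R) := fun r hr =>
    integrableOn_ball_of_continuous (hw.abs.rpow_const fun _ => Or.inr hr)
  have hcomp : ∀ x, (|w x| ^ q) ^ (p / q) = |w x| ^ p := fun x => by
    rw [← Real.rpow_mul (abs_nonneg _), mul_div_cancel₀ _ hq.ne']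
  have hpq : 1 ≤ p / q := by rwa [one_le_div hq]
  have hJ := (convexOn_rpow hpq).map_set_average_le (μ := volume) (t := Metric.ball x₀ R)
    (f := fun x => |w x| ^ q)
    (Real.continuous_rpow_const (by positivity)).continuousOn isClosed_Ici
    (Metric.measure_ball_pos _ _ hR).ne' measure_ball_lt_top.ne
    (Eventually.of_forall fun x => mem_Ici.2 (Real.rpow_nonneg (abs_nonneg _) _)) (hint q hq.le)
    (by simpa only [Function.comp_def, hcomp] using hint p hp.le)
  simp only [hcomp] at hJ
  have h0 : 0 ≤ ⨍ x in Metric.ball x₀ R, |w x| ^ q :=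
    average_ball_nonneg fun x => by positivity
  have h1 := Real.rpow_le_rpow (by positivity) hJ (z := q / p) (by positivity)
  rwa [← Real.rpow_mul h0, div_mul_div_cancel₀ hq.ne', div_self hp.ne', Real.rpow_one,
    show q / p = 1 / p * q by ring, Real.rpow_mul] at h1
  exact average_ball_nonneg fun x => by positivity

/-- Averages over balls are monotone; the smaller function need not be integrable. -/
theorem average_ball_mono {n : ℕ} {R : ℝ} {x₀ : EuclideanSpace ℝ (Fin n)}
    {f h : EuclideanSpace ℝ (Fin n) → ℝ} (hf : ∀ x, 0 ≤ f x) (hfh : ∀ x, f x ≤ h x)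
    (hh : Continuous h) :
    ⨍ x in Metric.ball x₀ R, f x ≤ ⨍ x in Metric.ball x₀ R, h x := by
  rw [setAverage_eq, setAverage_eq]
  refine smul_le_smul_of_nonneg_left ?_ (by positivity)
  exact integral_mono_of_nonneg (Eventually.of_forall hf)
    (integrableOn_ball_of_continuous hh) (Eventually.of_forall hfh)

/-- The Sobolev inequality for `G(|u|/R)^{1/q}`. -/
theorem exists_average_sobolev_orlicz {n : ℕ} {q b : ℝ} (hq : 1 ≤ q) (hqn : q < n)
    (hqb : q < b) :
    ∃ c : ℝ, 0 < c ∧ ∀ (a : ℝ) (G g : ℝ → ℝ), IsOrliczPrimitive a b G g → q < a →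
      ∀ (R : ℝ), 0 < R → ∀ (x₀ : EuclideanSpace ℝ (Fin n)) (u : EuclideanSpace ℝ (Fin n) → ℝ),
      ContDiff ℝ 1 u → HasCompactSupport u → tsupport u ⊆ Metric.ball x₀ R →
      (⨍ x in Metric.ball x₀ R, (G (|u x| / R) ^ (1 / q)) ^ (n * q / (n - q)))
          ^ (1 / (n * q / (n - q)))
        ≤ c * (⨍ x in Metric.ball x₀ R, G ‖fderiv ℝ u x‖) ^ (1 / q) := by
  obtain ⟨K, hK0, hK⟩ := exists_average_sobolev hq hqn
  have hq0 : 0 < q := by linarith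
  have hb0 : 0 < b := hq0.trans hqb
  have hsub : (0 : ℝ) < n - q := sub_pos.2 hqn
  set p : ℝ := n * q / (n - q) with hp
  have hqp : q ≤ p := by rw [hp, le_div_iff₀ hsub]; nlinarith
  have hp0 : 0 < p := hq0.trans_le hqp
  set L : ℝ := (K * (b / q)) ^ q with hL
  have hL0 : 0 ≤ L := by positivity
  set η : ℝ := (2 * (L + 1))⁻¹ ^ (1 / q) with hη
  have hη0 : 0 < η := by positivity
  have hηq : η ^ q = (2 * (L + 1))⁻¹ := by
    rw [hη, ← Real.rpow_mul (by positivity), one_div_mul_cancel hq0.ne', Real.rpow_one]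
  have hη1 : η ≤ 1 := Real.rpow_le_one (by positivity)
    (inv_le_one_of_one_le₀ (by linarith)) (by positivity)
  set M : ℝ := η ^ (q - b) with hM
  have hM0 : 0 < M := Real.rpow_pos_of_pos hη0 _
  refine ⟨(2 * (L + 1) * M) ^ (1 / q), by positivity, ?_⟩
  intro a G g h hqa R hR x₀ u hu hcu hsu
  have ha0 : 0 < a := hq0.trans hqa
  obtain ⟨ψ, hψc, hψ0, hψd, hψb⟩ := h.exists_hasDerivAt_rpow hq0 hqa
  have hquot : ∀ x, |u x| / R = |u x / R| := fun x => by rw [abs_div, abs_of_pos hR]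
  set w : EuclideanSpace ℝ (Fin n) → ℝ := fun x => G |u x / R| ^ (1 / q) with hw
  have hwnn : ∀ x, 0 ≤ w x := fun x => Real.rpow_nonneg (h.nonneg (abs_nonneg _)) _
  have hwq : ∀ x, |w x| ^ q = G |u x / R| := fun x => by
    rw [abs_of_nonneg (hwnn x), hw, ← Real.rpow_mul (h.nonneg (abs_nonneg _)),
      one_div_mul_cancel hq0.ne', Real.rpow_one]
  have hΨ : ContDiff ℝ 1 fun t : ℝ => G |t| ^ (1 / q) := by
    refine contDiff_one_iff_deriv.2 ⟨fun t => (hψd t).differentiableAt, ?_⟩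
    rwa [show deriv (fun t : ℝ => G |t| ^ (1 / q)) = ψ from funext fun t => (hψd t).deriv]
  have hwC : ContDiff ℝ 1 w := hΨ.comp (hu.div_const R)
  have hw0 : ∀ x, u x = 0 → w x = 0 := fun x hx => by
    simp [hw, hx, h.zero, Real.zero_rpow (inv_pos.2 hq0).ne']
  have hsupp : Function.support w ⊆ Function.support u := fun x hx hx' => hx (hw0 x hx')
  have hsw : tsupport w ⊆ Metric.ball x₀ R := (closure_mono hsupp).trans hsu
  have hcw : HasCompactSupport w := hcu.mono hsupp
  have hDw : ∀ x, ‖fderiv ℝ w x‖ = |ψ (u x / R)| * (‖fderiv ℝ u x‖ / R) := fun x => by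
    have h1 : HasFDerivAt (fun x => u x / R) (R⁻¹ • fderiv ℝ u x) x := by
      simpa only [div_eq_inv_mul] using
        (hu.differentiable one_ne_zero x).hasFDerivAt.const_mul R⁻¹
    have h2 : HasFDerivAt w (ψ (u x / R) • R⁻¹ • fderiv ℝ u x) x := by
      have := (hψd (u x / R)).comp_hasFDerivAt x h1
      exact this
    rw [h2.fderiv, norm_smul, norm_smul, norm_inv,
      Real.norm_eq_abs, Real.norm_eq_abs, abs_of_pos hR,
      div_eq_inv_mul ‖fderiv ℝ u x‖]
  have hGu : Continuous fun x => G |u x / R| :=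
    (h.continuous_comp_abs ha0).comp (hu.continuous.div_const R)
  have hGD : Continuous fun x => G ‖fderiv ℝ u x‖ := by
    simpa only [Function.comp_def, abs_norm] using
      (h.continuous_comp_abs ha0).comp (hu.continuous_fderiv one_ne_zero).norm
  have hpt : ∀ x, (K * R) ^ q * ‖fderiv ℝ w x‖ ^ q
      ≤ L * η ^ q * G |u x / R| + L * M * G ‖fderiv ℝ u x‖ := by
    intro x
    set t := u x / R
    set ρ := ‖fderiv ℝ u x‖
    have hρ : 0 ≤ ρ := norm_nonneg _
    have hGt : 0 ≤ G |t| := h.nonneg (abs_nonneg t)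
    have hGρ : 0 ≤ G ρ := h.nonneg hρ
    rw [hDw, ← Real.mul_rpow (by positivity) (by positivity),
      show K * R * (|ψ t| * (ρ / R)) = K * (|ψ t| * ρ) by field_simp]
    rcases eq_or_ne t 0 with h0 | h0
    · rw [h0, hψ0, abs_zero, zero_mul, mul_zero, Real.zero_rpow hq0.ne']
      have := h.zero
      positivity
    have ht : 0 < |t| := abs_pos.2 h0
    calc (K * (|ψ t| * ρ)) ^ q
        ≤ (K * (b / q * (G |t| ^ (1 / q) / |t|) * ρ)) ^ q := by
          gcongr
          exact hψb t
      _ = ((K * (b / q)) * (G |t| ^ (1 / q) * (ρ / |t|))) ^ q := by congr 1; ring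
      _ = L * (G |t| * (ρ / |t|) ^ q) := by
          rw [Real.mul_rpow (x := K * (b / q)) (by positivity) (by positivity),
            Real.mul_rpow (x := G |t| ^ (1 / q)) (by positivity) (by positivity),
            ← Real.rpow_mul hGt, one_div_mul_cancel hq0.ne', Real.rpow_one]
      _ ≤ L * (η ^ q * G |t| + M * G ρ) := by
          gcongr
          exact h.mul_div_rpow_le hq0 hqa.le hη0 hη1 ht hρ
      _ = _ := by ring
  set A := (⨍ x in Metric.ball x₀ R, |w x| ^ p) ^ (1 / p) with hA
  set D := ⨍ x in Metric.ball x₀ R, G ‖fderiv ℝ u x‖ with hD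
  have hA0 : 0 ≤ A := Real.rpow_nonneg (average_ball_nonneg fun x => by positivity) _
  have hD0 : 0 ≤ D := average_ball_nonneg fun x => h.nonneg (norm_nonneg _)
  have hGA : ⨍ x in Metric.ball x₀ R, G |u x / R| ≤ A ^ q := by
    simpa only [hwq] using average_le_rpow_average hq0 hqp hR x₀ hwC.continuous
  have hAq : A ^ q ≤ L * η ^ q * A ^ q + L * M * D := by
    have hJ0 : 0 ≤ ⨍ x in Metric.ball x₀ R, ‖fderiv ℝ w x‖ ^ q := average_ball_nonneg fun x => by positivity
    calc A ^ q
        ≤ (K * R * (⨍ x in Metric.ball x₀ R, ‖fderiv ℝ w x‖ ^ q) ^ (1 / q)) ^ q :=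
          Real.rpow_le_rpow hA0 (hK R hR x₀ w hwC hcw hsw) hq0.le
      _ = (K * R) ^ q * ⨍ x in Metric.ball x₀ R, ‖fderiv ℝ w x‖ ^ q := by
          rw [Real.mul_rpow (by positivity) (by positivity), ← Real.rpow_mul hJ0,
            one_div_mul_cancel hq0.ne', Real.rpow_one]
      _ = ⨍ x in Metric.ball x₀ R, (K * R) ^ q * ‖fderiv ℝ w x‖ ^ q := by
          simp only [setAverage_eq, smul_eq_mul, integral_const_mul]; ring
      _ ≤ ⨍ x in Metric.ball x₀ R, (L * η ^ q * G |u x / R| + L * M * G ‖fderiv ℝ u x‖) :=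
          average_ball_mono (fun x => by positivity) hpt
            ((continuous_const.mul hGu).add (continuous_const.mul hGD))
      _ = L * η ^ q * (⨍ x in Metric.ball x₀ R, G |u x / R|) + L * M * D := by
          simp only [hD, setAverage_eq, smul_eq_mul]
          rw [integral_add ((integrableOn_ball_of_continuous hGu).const_mul _)
            ((integrableOn_ball_of_continuous hGD).const_mul _), integral_const_mul, integral_const_mul]
          ring
      _ ≤ _ := by gcongr
  have hAbs : A ^ q ≤ 2 * (L + 1) * M * D := by
    have h1 : L * η ^ q ≤ 1 / 2 := by
      rw [hηq, ← div_eq_mul_inv, div_le_div_iff₀ (by positivity) two_pos]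
      linarith
    nlinarith [mul_le_mul_of_nonneg_right h1 (Real.rpow_nonneg hA0 q), mul_nonneg hM0.le hD0]
  have hgoal : (⨍ x in Metric.ball x₀ R, (G (|u x| / R) ^ (1 / q)) ^ p) ^ (1 / p) = A := by
    simp only [hA, abs_of_nonneg (hwnn _)]
    simp only [hw, hquot]
  rw [hgoal, ← Real.mul_rpow (by positivity) hD0]
  calc A = (A ^ q) ^ (1 / q) := by
        rw [← Real.rpow_mul hA0, mul_one_div_cancel hq0.ne', Real.rpow_one]
    _ ≤ _ := Real.rpow_le_rpow (by positivity) hAbs (by positivity)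

/-- Elliptic Sobolev inequality in Orlicz form: for `1 ≤ q < min{n, g₀}` and
`q* = nq/(n−q)`, there is `c > 0` depending only on `n, g₁, q` such that for every ball
`B_R` and every `u ∈ C_c^∞(B_R)`,
`(⨍_{B_R} F̃(|u|/R)^{q*})^{1/q*} ≤ c·(⨍_{B_R} G(|Du|))^{1/q}`. -/
theorem elliptic_sobolev_orlicz
    (n : ℕ) (hn : 2 ≤ n) (g₁ q : ℝ) (hq1 : 1 ≤ q) (hqn : q < n) (hg₁q : q < g₁) :
    ∃ c : ℝ, 0 < c ∧
      ∀ (g₀ : ℝ), 1 < g₀ → g₀ ≤ g₁ → q < g₀ →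
      ∀ (g g' : ℝ → ℝ),
        (∀ s, 0 < s → 0 < g s) →
        (∀ s, 0 < s → HasDerivAt g (g' s) s) →
        ContinuousOn g' (Set.Ioi 0) →
        (∀ s, 0 < s → (g₀ - 1) * g s ≤ s * g' s ∧ s * g' s ≤ (g₁ - 1) * g s) →
      ∀ (G F Ft : ℝ → ℝ),
        (∀ s, G s = ∫ r in (0:ℝ)..s, g r) →
        (∀ s, F s = sSup ((fun r => (max ((s * r) ^ q - G r) 0) ^ (1 / q)) '' Set.Ioi 0)) →
        (∀ s, Ft s = sSup ((fun r => s * r - F r) '' Set.Ici 0)) →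
      ∀ (R : ℝ), 0 < R → ∀ (x₀ : EuclideanSpace ℝ (Fin n))
        (u : EuclideanSpace ℝ (Fin n) → ℝ),
        ContDiff ℝ (⊤ : ℕ∞) u → HasCompactSupport u → tsupport u ⊆ Metric.ball x₀ R →
        (⨍ x in Metric.ball x₀ R, Ft (|u x| / R) ^ (n * q / (n - q)))
            ^ (1 / (n * q / (n - q)))
          ≤ c * (⨍ x in Metric.ball x₀ R, G ‖fderiv ℝ u x‖) ^ (1 / q) := by
  obtain ⟨c, hc0, hc⟩ := exists_average_sobolev_orlicz (n := n) hq1 hqn hg₁q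
  refine ⟨c, hc0, ?_⟩
  intro g₀ hg₀ _ hqg₀ g g' hpos hd _ ho G F Ft hG hF hFt R hR x₀ u hu hcu hsu
  have h := isOrliczPrimitive_of_orlicz_condition hg₀ hpos hd ho hG
  have hsub : (0 : ℝ) < n - q := sub_pos.2 hqn
  have hp0 : 0 < n * q / (n - q) := by positivity
  have hmem := fun x => h.conjugate_mem_Icc hq1 hqg₀ hF hFt (v := |u x| / R) (by positivity)
  refine le_trans ?_ (hc g₀ G g h hqg₀ R hR x₀ u (hu.of_le (by exact_mod_cast le_top)) hcu hsu)
  have hcont : Continuous fun x => G (|u x| / R) := by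
    have := (h.continuous_comp_abs (by linarith)).comp (hu.continuous.div_const R)
    simpa only [Function.comp_def, abs_div, abs_of_pos hR] using this
  refine Real.rpow_le_rpow ?_ ?_ (by positivity)
  · exact average_ball_nonneg fun x => Real.rpow_nonneg (hmem x).1 _
  · exact average_ball_mono (fun x => Real.rpow_nonneg (hmem x).1 _)
      (fun x => Real.rpow_le_rpow (hmem x).1 (hmem x).2 hp0.le)
      ((hcont.rpow_const fun _ => Or.inr (by positivity)).rpow_const fun _ => Or.inr hp0.le)
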